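/- Every nonzero 2-dimensional pre-Lie algebra over ℂ is isomorphic to exactly one of the following algebras, given by a multiplication table on a basis e1, e2 (all unlisted products of basis elements are zero): C01: e1∘e1 = e1 + e2, e2∘e1 = e2; C02: e1∘e1 = e1 + e2, e1∘e2 = e2; C03: e1∘e1 = e2; C04: e2∘e1 = e1; C05^α (α ∈ ℂ): e1∘e1 = e1, e1∘e2 = α·e2; C06^α (α ∈ ℂ): e1∘e1 = e1, e1∘e2 = α·e2, e2∘e1 = e2; C07: e1∘e1 = e1, e2∘e2 = e2; C08: e1∘e1 = e1, e1∘e2 = 2·e2, e2∘e1 = (1/2)·e1 + e2, e2∘e2 = e2. These algebras are pairwise non-isomorphic, and within the families C05^α and C06^α distinct parameters give non-isomorphic algebras. -/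

import Mathlib

/-!
A commutative pre-Lie algebra is associative. Unless all products vanish, some `x` is linearly
independent of `x²`; then `x³ = (r + s) x² - r s x` by algebraic closedness, and the roots `r`, `s`
determine the algebra through the eigenvectors `x² - s x`, `x² - r x` of multiplication by `x`.

A noncommutative one has a basis with `[x, y] = x`. If `x` and `x²` are independent, the pre-Lie
identity determines the whole table in the basis `x`, `x²`, which gives C08. Otherwise it forces
`x² = 0` and makes the line spanned by `x` an ideal. If `y²` lies on that line this is C04; if not,
a multiple `z` of `y` satisfies `z² = z + ρ x`, `z x = α x`, `x z = β x` with `β ∈ {0, 1}`.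
Replacing `z` by `z + γ x` removes `ρ`, except when `α + β = 1`, which is where C01 and C02 come
from.

With `L x` and `R x` the traces of left and right multiplication by `x`, the algebras are told apart
by the scalars `k` with `L = k R`, the scalars `k` with `R (x²) = k (R x)²` for all `x`, and the
existence of a nonzero idempotent.
-/

noncomputable section

/-- The 2-dimensional complex vector space. -/
abbrev V2 : Type := Fin 2 → ℂ

/-- The bilinear multiplication on `V2` determined by a table of structure constants:
`c i j` is the product of the `i`-th and `j`-th basis vectors. -/
def tm (c : Fin 2 → Fin 2 → V2) : V2 → V2 → V2 :=
  fun x y => ∑ i, ∑ j, (x i * y j) • c i j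

/-- Multiplication table with the given values of `e1*e1`, `e1*e2`, `e2*e1`, `e2*e2`. -/
def tbl (a b c d : V2) : Fin 2 → Fin 2 → V2 := ![![a, b], ![c, d]]

/-- The zero multiplication on `V2`. -/
def zm : V2 → V2 → V2 := fun _ _ => 0

/-- Isomorphism of algebras with one multiplication: a ℂ-linear bijection preserving
the multiplication. -/
def Iso1 {A : Type*} [AddCommGroup A] [Module ℂ A] {B : Type*} [AddCommGroup B]
    [Module ℂ B] (μ : A → A → A) (ν : B → B → B) : Prop :=
  ∃ φ : A ≃ₗ[ℂ] B, ∀ x y, φ (μ x y) = ν (φ x) (φ y)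

/-- Isomorphism of algebras with two multiplications: a ℂ-linear bijection preserving
both multiplications. -/
def Iso2 {A : Type*} [AddCommGroup A] [Module ℂ A] {B : Type*} [AddCommGroup B]
    [Module ℂ B] (μ₁ μ₂ : A → A → A) (ν₁ ν₂ : B → B → B) : Prop :=
  ∃ φ : A ≃ₗ[ℂ] B,
    (∀ x y, φ (μ₁ x y) = ν₁ (φ x) (φ y)) ∧ (∀ x y, φ (μ₂ x y) = ν₂ (φ x) (φ y))

/-- The commutative associative algebra A01: `e1·e1 = e1`, `e2·e2 = e2`. -/
def cA01 : Fin 2 → Fin 2 → V2 := tbl ![1,0] 0 0 ![0,1]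

/-- The commutative associative algebra A02: `e1·e1 = e1`, `e1·e2 = e2·e1 = e2`. -/
def cA02 : Fin 2 → Fin 2 → V2 := tbl ![1,0] ![0,1] ![0,1] 0

/-- The commutative associative algebra A03: `e1·e1 = e1`. -/
def cA03 : Fin 2 → Fin 2 → V2 := tbl ![1,0] 0 0 0

/-- The commutative associative algebra A04: `e1·e1 = e2`. -/
def cA04 : Fin 2 → Fin 2 → V2 := tbl ![0,1] 0 0 0

/-- Index of the nonzero 2-dimensional pre-Lie algebras C01–C08. -/
inductive PLIdx : Type
  | c01 | c02 | c03 | c04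
  | c05 (α : ℂ)
  | c06 (α : ℂ)
  | c07 | c08

/-- The multiplication tables of the nonzero 2-dimensional pre-Lie algebras C01–C08. -/
def plAlg : PLIdx → Fin 2 → Fin 2 → V2
  | .c01 => tbl ![1,1] 0 ![0,1] 0            -- e1∘e1 = e1+e2, e2∘e1 = e2
  | .c02 => tbl ![1,1] ![0,1] 0 0            -- e1∘e1 = e1+e2, e1∘e2 = e2
  | .c03 => tbl ![0,1] 0 0 0                 -- e1∘e1 = e2
  | .c04 => tbl 0 0 ![1,0] 0                 -- e2∘e1 = e1
  | .c05 α => tbl ![1,0] ![0,α] 0 0          -- e1∘e1 = e1, e1∘e2 = α e2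
  | .c06 α => tbl ![1,0] ![0,α] ![0,1] 0     -- e1∘e1 = e1, e1∘e2 = α e2, e2∘e1 = e2
  | .c07 => tbl ![1,0] 0 0 ![0,1]            -- e1∘e1 = e1, e2∘e2 = e2
  | .c08 => tbl ![1,0] ![0,2] ![1/2,1] ![0,1]

section Algebra

variable {R A B : Type*} [CommRing R] [AddCommGroup A] [Module R A] [AddCommGroup B] [Module R B]

/-- The pre-Lie identity for a bilinear multiplication: its associator is symmetric in the first
two arguments. -/
def IsPreLie (μ : A →ₗ[R] A →ₗ[R] A) : Prop :=
  ∀ x y z, μ (μ x y) z - μ (μ y x) z = μ x (μ y z) - μ y (μ x z)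

/-- The linear form sending `x` to the trace of left multiplication by `x`. -/
def leftTrace (μ : A →ₗ[R] A →ₗ[R] A) : A →ₗ[R] R := LinearMap.trace R A ∘ₗ μ

/-- The linear form sending `x` to the trace of right multiplication by `x`. -/
def rightTrace (μ : A →ₗ[R] A →ₗ[R] A) : A →ₗ[R] R := LinearMap.trace R A ∘ₗ μ.flip

/-- The scalars `k` with `leftTrace μ = k • rightTrace μ`, an isomorphism invariant of `μ`. -/
def traceRatios (μ : A →ₗ[R] A →ₗ[R] A) : Set R :=
  {k | ∀ x, leftTrace μ x = k * rightTrace μ x}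

/-- The scalars by which squaring multiplies the square of the right trace form, an isomorphism
invariant of `μ`. -/
def squareRatios (μ : A →ₗ[R] A →ₗ[R] A) : Set R :=
  {k | ∀ x, rightTrace μ (μ x x) = k * rightTrace μ x ^ 2}

theorem IsPreLie.assoc_of_comm {μ : A →ₗ[R] A →ₗ[R] A} (hμ : IsPreLie μ)
    (hcomm : ∀ x y, μ x y = μ y x) (x y z : A) : μ (μ x y) z = μ x (μ y z) := by
  have left_comm : μ x (μ z y) = μ z (μ x y) := by
    rw [← sub_eq_zero, ← hμ x z y, hcomm x z, sub_self]
  rw [hcomm (μ x y) z, ← left_comm, hcomm z y]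

theorem sq_sub_smul_mul_of_mul_eq_smul {μ : A →ₗ[R] A →ₗ[R] A} {x z : A}
    (hassoc : μ (μ x x) z = μ x (μ x z)) {t : R} (hz : μ x z = t • z) (s : R) :
    μ (μ x x - s • x) z = (t * (t - s)) • z := by
  simp only [map_sub, map_smul, LinearMap.sub_apply, LinearMap.smul_apply, hassoc, hz]
  module

variable {μ : A →ₗ[R] A →ₗ[R] A} {ν : B →ₗ[R] B →ₗ[R] B} (φ : A ≃ₗ[R] B)

theorem leftTrace_apply_equiv (hφ : ∀ x y, φ (μ x y) = ν (φ x) (φ y)) (x : A) :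
    leftTrace ν (φ x) = leftTrace μ x := by
  have hconj : ν (φ x) = φ.conj (μ x) := by
    ext y
    simp [LinearEquiv.conj_apply, hφ]
  simp only [leftTrace, LinearMap.comp_apply, hconj, LinearMap.trace_conj']

theorem rightTrace_apply_equiv (hφ : ∀ x y, φ (μ x y) = ν (φ x) (φ y)) (x : A) :
    rightTrace ν (φ x) = rightTrace μ x :=
  leftTrace_apply_equiv (μ := μ.flip) (ν := ν.flip) φ (fun x y => hφ y x) x

theorem traceRatios_eq_of_equiv (hφ : ∀ x y, φ (μ x y) = ν (φ x) (φ y)) :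
    traceRatios μ = traceRatios ν := by
  ext k
  simp only [traceRatios, Set.mem_ofPred_eq, φ.surjective.forall, leftTrace_apply_equiv φ hφ,
    rightTrace_apply_equiv φ hφ]

theorem squareRatios_eq_of_equiv (hφ : ∀ x y, φ (μ x y) = ν (φ x) (φ y)) :
    squareRatios μ = squareRatios ν := by
  ext k
  simp only [squareRatios, Set.mem_ofPred_eq, φ.surjective.forall, ← hφ,
    rightTrace_apply_equiv φ hφ]

theorem exists_idempotent_iff_of_equiv (hφ : ∀ x y, φ (μ x y) = ν (φ x) (φ y)) :
    (∃ x ≠ 0, μ x x = x) ↔ ∃ y ≠ 0, ν y y = y := by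
  simp only [φ.surjective.exists, ← hφ, φ.injective.eq_iff, ne_eq, map_eq_zero_iff φ φ.injective]

end Algebra

section Field

variable {K V : Type*} [Field K] [AddCommGroup V] [Module K V] {μ : V →ₗ[K] V →ₗ[K] V}

theorem exists_eq_smul_add_smul (hdim : Module.finrank K V = 2) {u v : V}
    (huv : LinearIndependent K ![u, v]) (x : V) : ∃ s t : K, x = s • u + t • v := by
  let b := basisOfLinearIndependentOfCardEqFinrank huv (by simp [hdim])
  exact ⟨_, _, by simpa [Fin.sum_univ_two, b] using (b.sum_repr x).symm⟩

theorem exists_linearIndependent_commutator_eq (hdim : Module.finrank K V = 2)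
    (hcomm : ¬ ∀ x y, μ x y = μ y x) :
    ∃ x y, LinearIndependent K ![x, y] ∧ μ x y - μ y x = x := by
  push Not at hcomm
  obtain ⟨u, v, huv⟩ := hcomm
  obtain ⟨w, hw⟩ :=
    exists_linearIndependent_pair_of_one_lt_finrank (hdim ▸ one_lt_two) (sub_ne_zero.2 huv)
  generalize he : μ u v - μ v u = e at hw
  obtain ⟨p, q, rfl⟩ := exists_eq_smul_add_smul hdim hw u
  obtain ⟨r, s, rfl⟩ := exists_eq_smul_add_smul hdim hw v
  simp only [map_add, map_smul, LinearMap.add_apply, LinearMap.smul_apply] at he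
  have hdet : (p * s - q * r) • (μ e w - μ w e) = e := by
    linear_combination (norm := module) he
  have hdet_ne : p * s - q * r ≠ 0 := by
    intro h
    rw [h, zero_smul] at hdet
    exact hw.ne_zero 0 hdet.symm
  refine ⟨e, (p * s - q * r) • w, ?_, by simpa [smul_sub] using hdet⟩
  simpa using (LinearIndependent.pair_smul_smul_iff isUnit_one hdet_ne.isUnit).2 hw

theorem exists_eq_smul_of_not_linearIndependent {u v : V} (hu : u ≠ 0)
    (huv : ¬ LinearIndependent K ![u, v]) : ∃ t : K, v = t • u := by
  simpa only [LinearIndependent.pair_iff' hu, not_forall, not_not, eq_comm] using huv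

theorem two_smul_mul_of_forall_sq_eq_smul [NeZero (2 : K)] (hcomm : ∀ x y, μ x y = μ y x)
    (hsq : ∀ x, ∃ t : K, μ x x = t • x) {x y : V} (hxy : LinearIndependent K ![x, y]) {a d : K}
    (ha : μ x x = a • x) (hd : μ y y = d • y) : (2 : K) • μ x y = d • x + a • y := by
  obtain ⟨t, ht⟩ := hsq (x + y)
  obtain ⟨s, hs⟩ := hsq (x - y)
  simp only [map_add, map_sub, LinearMap.add_apply, LinearMap.sub_apply, ha, hd, hcomm y x]
    at ht hs
  obtain ⟨h₁, h₂⟩ := hxy.eq_of_pair (s := 2 * a) (t := 2 * d) (s' := t + s) (t' := t - s)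
    (by linear_combination (norm := module) ht + hs)
  obtain rfl : t = a + d := mul_left_cancel₀ two_ne_zero (by linear_combination -h₁ - h₂)
  linear_combination (norm := module) ht

theorem sq_eq_zero_of_forall_sq_eq_smul [NeZero (2 : K)] (hcomm : ∀ x y, μ x y = μ y x)
    (hassoc : ∀ x y z, μ (μ x y) z = μ x (μ y z)) (hsq : ∀ x, ∃ t : K, μ x x = t • x)
    {x y : V} (hxy : LinearIndependent K ![x, y]) : μ x x = 0 := by
  obtain ⟨a, ha⟩ := hsq x
  obtain ⟨d, hd⟩ := hsq y
  have hmul := two_smul_mul_of_forall_sq_eq_smul hcomm hsq hxy ha hd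
  have hx := hassoc x x y
  have hmul' := congrArg (μ x) hmul
  simp only [map_add, map_smul, LinearMap.smul_apply, ha] at hx hmul'
  obtain ⟨-, ha_sq⟩ := hxy.eq_of_pair (s := a * d) (t := a * a) (s' := 2 * (a * d)) (t' := 0)
    (by linear_combination (norm := module) 2 • hmul' + 4 • hx - a • hmul)
  rw [ha, mul_self_eq_zero.1 ha_sq, zero_smul]

theorem exists_linearIndependent_sq [NeZero (2 : K)] (hdim : 1 < Module.finrank K V)
    (hcomm : ∀ x y, μ x y = μ y x) (hassoc : ∀ x y z, μ (μ x y) z = μ x (μ y z))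
    (hne : ∃ x y, μ x y ≠ 0) : ∃ x, LinearIndependent K ![x, μ x x] := by
  by_contra! hdep
  have hsq (x : V) : ∃ t : K, μ x x = t • x := by
    by_cases hx : x = 0
    · exact ⟨0, by simp [hx]⟩
    · exact exists_eq_smul_of_not_linearIndependent hx (hdep x)
  have hsq_zero (x : V) : μ x x = 0 := by
    by_cases hx : x = 0
    · simp [hx]
    · obtain ⟨y, hxy⟩ := exists_linearIndependent_pair_of_one_lt_finrank hdim hx
      exact sq_eq_zero_of_forall_sq_eq_smul hcomm hassoc hsq hxy
  obtain ⟨x, y, hxy⟩ := hne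
  have hpolar := hsq_zero (x + y)
  simp only [map_add, LinearMap.add_apply, hsq_zero, hcomm y x, zero_add, add_zero] at hpolar
  rw [← two_smul K] at hpolar
  exact hxy ((smul_eq_zero_iff_right two_ne_zero).1 hpolar)

namespace IsPreLie

theorem mul_of_commutator_eq_of_sq_eq_smul [NeZero (2 : K)] (hdim : Module.finrank K V = 2)
    (hμ : IsPreLie μ) {x y : V} (hxy : LinearIndependent K ![x, y]) (hcomm : μ x y - μ y x = x)
    {a : K} (hsq : μ x x = a • x) :
    μ x x = 0 ∧ ∃ c p q : K, μ x y = c • x ∧ μ y y = p • x + q • y ∧ (c = 0 ∨ c = q) := by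
  obtain ⟨c, d, hmul⟩ := exists_eq_smul_add_smul hdim hxy (μ x y)
  obtain ⟨p, q, hyy⟩ := exists_eq_smul_add_smul hdim hxy (μ y y)
  have hmul' : μ y x = (c - 1) • x + d • y := by
    linear_combination (norm := module) hmul - hcomm
  have hx := hμ x y x
  have hy := hμ x y y
  rw [← LinearMap.sub_apply, ← map_sub, hcomm] at hx hy
  simp only [map_add, map_smul, hsq, hmul, hmul', hyy] at hx hy
  obtain ⟨hxx, hxy'⟩ := hxy.eq_of_pair (s := a) (t := 0) (s' := d * c) (t' := d * (d - a))
    (by linear_combination (norm := module) hx)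
  obtain ⟨hyx, hyy'⟩ := hxy.eq_of_pair (s := c) (t := d)
    (s' := p * a + q * c - c * (c - 1) - d * p) (t' := -c * d)
    (by linear_combination (norm := module) hy)
  obtain rfl : d = 0 := by
    by_contra hd
    have had : a = d := by simpa [hd, sub_eq_zero, eq_comm] using hxy'
    have hc : c = 1 := by simpa [had, hd] using hxx
    have h2d : 2 * d = 0 := by linear_combination hyy' - d * hc
    exact hd ((mul_eq_zero.1 h2d).resolve_left two_ne_zero)
  obtain rfl : a = 0 := by simpa using hxx
  refine ⟨by simpa using hsq, c, p, q, by simpa using hmul, hyy, ?_⟩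
  have hcq : c * (c - q) = 0 := by linear_combination hyx
  simpa [sub_eq_zero] using hcq

theorem mul_of_commutator_sq_eq_smul [NeZero (2 : K)] (hdim : Module.finrank K V = 2)
    (hμ : IsPreLie μ) {x : V} (hx : LinearIndependent K ![x, μ x x]) {k : K} (hk : k ≠ 0)
    (hcomm : μ x (μ x x) - μ (μ x x) x = k • x) :
    μ x (μ x x) = 0 ∧ μ (μ x x) (μ x x) = (-2 * k) • μ x x := by
  generalize hw : μ x x = w at *
  obtain ⟨s, t, hxw⟩ := exists_eq_smul_add_smul hdim hx (μ x w)
  have hwx : μ w x = (s - k) • x + t • w := by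
    linear_combination (norm := module) hxw - hcomm
  have hxwx := hμ x w x
  have hxww := hμ x w w
  rw [← LinearMap.sub_apply, ← map_sub, hcomm] at hxwx hxww
  have hww : μ w w = (t * s) • x + (s - 2 * k + t * t) • w := by
    simp only [map_add, map_smul, LinearMap.smul_apply, hw, hxw, hwx] at hxwx
    linear_combination (norm := module) hxwx
  simp only [map_add, map_smul, LinearMap.smul_apply, hw, hxw, hwx, hww] at hxww
  obtain ⟨hs, ht⟩ := hx.eq_of_pair (s := 2 * k * s) (t := k * t) (s' := 0) (t' := 0)
    (by linear_combination (norm := module) hxww)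
  obtain rfl : s = 0 := by simpa [hk, two_ne_zero (α := K)] using hs
  obtain rfl : t = 0 := by simpa [hk] using ht
  exact ⟨by simpa using hxw, by simpa using hww⟩

end IsPreLie

end Field

section Classification

variable {V : Type*} [AddCommGroup V] [Module ℂ V] {μ : V →ₗ[ℂ] V →ₗ[ℂ] V}

theorem iso1_tm_of_linearIndependent (hdim : Module.finrank ℂ V = 2) {u v : V}
    (huv : LinearIndependent ℂ ![u, v]) {c : Fin 2 → Fin 2 → V2}
    (h₀₀ : μ u u = c 0 0 0 • u + c 0 0 1 • v) (h₀₁ : μ u v = c 0 1 0 • u + c 0 1 1 • v)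
    (h₁₀ : μ v u = c 1 0 0 • u + c 1 0 1 • v) (h₁₁ : μ v v = c 1 1 0 • u + c 1 1 1 • v) :
    Iso1 (fun x y => μ x y) (tm c) := by
  let b := basisOfLinearIndependentOfCardEqFinrank huv (by simp [hdim])
  have hb_u : b.equivFun u = ![1, 0] := by
    have : u = b 0 := by simp [b]
    ext k
    fin_cases k <;> simp [this]
  have hb_v : b.equivFun v = ![0, 1] := by
    have : v = b 1 := by simp [b]
    ext k
    fin_cases k <;> simp [this]
  refine ⟨b.equivFun, fun x y => ?_⟩
  obtain ⟨x₀, x₁, rfl⟩ := exists_eq_smul_add_smul hdim huv x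
  obtain ⟨y₀, y₁, rfl⟩ := exists_eq_smul_add_smul hdim huv y
  simp only [map_add, map_smul, LinearMap.add_apply, LinearMap.smul_apply, h₀₀, h₀₁, h₁₀, h₁₁,
    hb_u, hb_v]
  ext k
  fin_cases k <;> simp [tm] <;> ring

theorem exists_iso1_plAlg_of_mul_self_add (hdim : Module.finrank ℂ V = 2) {z x : V}
    (hzx : LinearIndependent ℂ ![z, x]) {α β ρ : ℂ} (hβ : β = 0 ∨ β = 1)
    (hzz : μ z z = z + ρ • x) (hmul : μ z x = α • x) (hmul' : μ x z = β • x) (hxx : μ x x = 0) :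
    ∃ i, Iso1 (fun x y => μ x y) (tm (plAlg i)) := by
  by_cases hαβ : ρ ≠ 0 ∧ α + β = 1
  · obtain ⟨hρ, hα⟩ := hαβ
    obtain rfl : α = 1 - β := by linear_combination hα
    have hzρx : LinearIndependent ℂ ![z, ρ • x] := by
      simpa using (LinearIndependent.pair_smul_smul_iff isUnit_one hρ.isUnit).2 hzx
    rcases hβ with rfl | rfl
    · refine ⟨.c02, iso1_tm_of_linearIndependent hdim hzρx ?_ ?_ ?_ ?_⟩ <;>
        simp [plAlg, tbl, hzz, hmul, hmul', hxx]
    · refine ⟨.c01, iso1_tm_of_linearIndependent hdim hzρx ?_ ?_ ?_ ?_⟩ <;>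
        simp [plAlg, tbl, hzz, hmul, hmul', hxx]
  · obtain ⟨γ, hγ⟩ : ∃ γ : ℂ, ρ + γ * (α + β) = γ := by
      by_cases hρ : ρ = 0
      · exact ⟨0, by simp [hρ]⟩
      · have hα : 1 - (α + β) ≠ 0 := sub_ne_zero.2 fun h => hαβ ⟨hρ, h.symm⟩
        exact ⟨ρ / (1 - (α + β)), by field_simp; ring⟩
    have he : LinearIndependent ℂ ![z + γ • x, x] := by simpa using hzx
    have hee : μ (z + γ • x) (z + γ • x) = z + γ • x := by
      simp only [map_add, map_smul, LinearMap.add_apply, LinearMap.smul_apply, hzz, hmul, hmul',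
        hxx]
      linear_combination (norm := module) hγ • x
    rcases hβ with rfl | rfl
    · refine ⟨.c05 α, iso1_tm_of_linearIndependent hdim he (hee.trans ?_) ?_ ?_ ?_⟩ <;>
        simp [plAlg, tbl, hmul, hmul', hxx]
    · refine ⟨.c06 α, iso1_tm_of_linearIndependent hdim he (hee.trans ?_) ?_ ?_ ?_⟩ <;>
        simp [plAlg, tbl, hmul, hmul', hxx]

theorem exists_iso1_plAlg_of_orthogonal (hdim : Module.finrank ℂ V = 2) {u v : V}
    (huv : LinearIndependent ℂ ![u, v]) {m n : ℂ} (hm : m ≠ 0) (huu : μ u u = m • u)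
    (hvv : μ v v = n • v) (hmul : μ u v = 0) (hmul' : μ v u = 0) :
    ∃ i, Iso1 (fun x y => μ x y) (tm (plAlg i)) := by
  have hscale {k : ℂ} (hk : k ≠ 0) : LinearIndependent ℂ ![m⁻¹ • u, k • v] :=
    (LinearIndependent.pair_smul_smul_iff (inv_ne_zero hm).isUnit hk.isUnit).2 huv
  by_cases hn : n = 0
  · refine exists_iso1_plAlg_of_mul_self_add hdim (hscale one_ne_zero) (α := 0) (β := 0) (ρ := 0)
      (.inl rfl) ?_ ?_ ?_ ?_ <;> simp [huu, hvv, hmul, hmul', hm, hn]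
  · refine ⟨.c07, iso1_tm_of_linearIndependent hdim (hscale (inv_ne_zero hn)) ?_ ?_ ?_ ?_⟩ <;>
      simp [plAlg, tbl, huu, hvv, hmul, hmul', hm, hn]

theorem exists_iso1_plAlg_of_factored (hdim : Module.finrank ℂ V = 2)
    (hcomm : ∀ x y, μ x y = μ y x) (hassoc : ∀ x y z, μ (μ x y) z = μ x (μ y z)) {x : V}
    (hx : LinearIndependent ℂ ![x, μ x x]) {r s : ℂ} (hr : r ≠ 0)
    (hcube : μ x (μ x x) = (r + s) • μ x x - (r * s) • x) :
    ∃ i, Iso1 (fun x y => μ x y) (tm (plAlg i)) := by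
  have eigen_r : μ x (μ x x - s • x) = r • (μ x x - s • x) := by
    simp only [map_sub, map_smul, hcube]
    module
  have eigen_s : μ x (μ x x - r • x) = s • (μ x x - r • x) := by
    simp only [map_sub, map_smul, hcube]
    module
  have mul_r := sq_sub_smul_mul_of_mul_eq_smul (hassoc x x _) eigen_r
  have mul_s := sq_sub_smul_mul_of_mul_eq_smul (hassoc x x _) eigen_s
  by_cases hrs : r = s
  · subst hrs
    have hu : LinearIndependent ℂ ![r⁻¹ • x, μ x x - r • x] := by
      simpa [sub_eq_neg_add] using
        (LinearIndependent.pair_add_smul_add_smul_iff r⁻¹ 0 (-r) 1).2 ⟨hx, by simpa using hr⟩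
    refine exists_iso1_plAlg_of_mul_self_add hdim hu (α := 1) (β := 1) (ρ := (r ^ 2)⁻¹)
      (.inr rfl) ?_ ?_ ?_ ?_
    · simp only [map_smul, LinearMap.smul_apply]
      match_scalars <;> field_simp
      ring
    · simp only [map_smul, LinearMap.smul_apply, eigen_r, inv_smul_smul₀ hr, one_smul]
    · rw [hcomm, map_smul, LinearMap.smul_apply, eigen_r, inv_smul_smul₀ hr, one_smul]
    · rw [mul_r, sub_self, mul_zero, zero_smul]
  · have huv : LinearIndependent ℂ ![μ x x - s • x, μ x x - r • x] := by
      simpa [sub_eq_neg_add, eq_comm] using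
        (LinearIndependent.pair_add_smul_add_smul_iff (-s) 1 (-r) 1).2
          ⟨hx, by simpa [eq_comm] using hrs⟩
    refine exists_iso1_plAlg_of_orthogonal hdim huv (mul_ne_zero hr (sub_ne_zero.2 hrs))
      (mul_r s) (mul_s r) ?_ ?_
    · rw [mul_s, sub_self, mul_zero, zero_smul]
    · rw [mul_r, sub_self, mul_zero, zero_smul]

theorem exists_iso1_plAlg_of_comm (hdim : Module.finrank ℂ V = 2)
    (hcomm : ∀ x y, μ x y = μ y x) (hassoc : ∀ x y z, μ (μ x y) z = μ x (μ y z))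
    (hne : ∃ x y, μ x y ≠ 0) : ∃ i, Iso1 (fun x y => μ x y) (tm (plAlg i)) := by
  obtain ⟨x, hx⟩ := exists_linearIndependent_sq (hdim ▸ one_lt_two) hcomm hassoc hne
  obtain ⟨b, a, hcube⟩ := exists_eq_smul_add_smul hdim hx (μ x (μ x x))
  obtain ⟨δ, hδ⟩ := IsAlgClosed.exists_pow_nat_eq (a ^ 2 + 4 * b) two_pos
  obtain ⟨r, s, rfl, rfl⟩ : ∃ r s : ℂ, a = r + s ∧ b = -(r * s) :=
    ⟨(a + δ) / 2, (a - δ) / 2, by ring, by linear_combination -hδ / 4⟩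
  by_cases hr : r = 0
  · by_cases hs : s = 0
    · refine ⟨.c03, iso1_tm_of_linearIndependent hdim hx ?_ ?_ ?_ ?_⟩ <;>
        simp [plAlg, tbl, hassoc, hcube, hr, hs]
    · exact exists_iso1_plAlg_of_factored hdim hcomm hassoc hx hs (s := r)
        (by rw [hcube]; module)
  · exact exists_iso1_plAlg_of_factored hdim hcomm hassoc hx hr (s := s)
      (by rw [hcube]; module)

theorem exists_iso1_plAlg_of_commutator_of_sq_eq_zero (hdim : Module.finrank ℂ V = 2) {x y : V}
    (hxy : LinearIndependent ℂ ![x, y]) {c p q : ℂ} (hcq : c = 0 ∨ c = q) (hxx : μ x x = 0)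
    (hmul : μ x y = c • x) (hmul' : μ y x = (c - 1) • x) (hyy : μ y y = p • x + q • y) :
    ∃ i, Iso1 (fun x y => μ x y) (tm (plAlg i)) := by
  by_cases hq : q = 0
  · obtain rfl : c = 0 := by simpa [hq] using hcq
    have hx : LinearIndependent ℂ ![x, (-p) • x + -y] :=
      (LinearIndependent.pair_add_smul_right_iff _).2 (LinearIndependent.pair_neg_right_iff.2 hxy)
    refine ⟨.c04, iso1_tm_of_linearIndependent hdim hx ?_ ?_ ?_ ?_⟩ <;>
      simp [plAlg, tbl, hxx, hmul, hmul', hyy, hq]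
  · have hyx : LinearIndependent ℂ ![q⁻¹ • y, x] := by
      rw [LinearIndependent.pair_symm_iff]
      simpa using (LinearIndependent.pair_smul_smul_iff isUnit_one (inv_ne_zero hq).isUnit).2 hxy
    have hcq' : q⁻¹ * c = 0 ∨ q⁻¹ * c = 1 :=
      hcq.imp (by rintro rfl; simp) (by rintro rfl; simp [hq])
    refine exists_iso1_plAlg_of_mul_self_add hdim hyx (α := q⁻¹ * (c - 1)) (ρ := p / q ^ 2) hcq'
      ?_ ?_ ?_ hxx
    · simp only [map_smul, LinearMap.smul_apply, hyy]
      match_scalars <;> field_simp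
    · simp [hmul', mul_smul]
    · simp [hmul, mul_smul]

theorem iso1_c08_of_commutator_sq (hdim : Module.finrank ℂ V = 2) {x : V}
    (hx : LinearIndependent ℂ ![x, μ x x]) {k : ℂ} (hk : k ≠ 0) (hmul : μ x (μ x x) = 0)
    (hmul' : μ (μ x x) x = -k • x) (hsq : μ (μ x x) (μ x x) = (-2 * k) • μ x x) :
    Iso1 (fun x y => μ x y) (tm (plAlg .c08)) := by
  -- In C08 the vector `g = e2 - e1 / 2` has square `-e2 / 2`, which dictates `τ` and the basis.
  obtain ⟨τ, hτ⟩ := IsAlgClosed.exists_pow_nat_eq (1 / (4 * k)) two_pos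
  let f := (-(2 * k)⁻¹) • μ x x
  let g := τ • x
  have hτ_ne : τ ≠ 0 := by rintro rfl; simp [hk] at hτ
  have hff : μ f f = f := by
    simp only [f, map_smul, LinearMap.smul_apply, hsq, smul_smul]
    congr 1
    field_simp
  have hfg : μ f g = (1 / 2 : ℂ) • g := by
    simp only [f, g, map_smul, LinearMap.smul_apply, hmul', smul_smul]
    congr 1
    field_simp
  have hgf : μ g f = 0 := by
    simp only [f, g, map_smul, LinearMap.smul_apply, hmul, smul_zero]
  have hgg : μ g g = (-1 / 2 : ℂ) • f := by
    simp only [f, g, map_smul, LinearMap.smul_apply, smul_smul, ← sq, hτ]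
    congr 1
    field_simp
    norm_num
  have hgf_indep : LinearIndependent ℂ ![g, f] :=
    (LinearIndependent.pair_smul_smul_iff hτ_ne.isUnit (by simpa using hk)).2 hx
  have hbasis : LinearIndependent ℂ ![(-2 : ℂ) • g + (2 : ℂ) • f, f] := by
    simpa using
      (LinearIndependent.pair_add_smul_add_smul_iff (-2 : ℂ) 2 0 1).2 ⟨hgf_indep, by norm_num⟩
  refine iso1_tm_of_linearIndependent hdim hbasis ?_ ?_ ?_ ?_ <;>
    simp [plAlg, tbl, hff, hfg, hgf, hgg] <;> module

theorem IsPreLie.exists_iso1_plAlg_of_not_comm (hdim : Module.finrank ℂ V = 2) (hμ : IsPreLie μ)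
    (hcomm : ¬ ∀ x y, μ x y = μ y x) : ∃ i, Iso1 (fun x y => μ x y) (tm (plAlg i)) := by
  obtain ⟨x, y, hxy, hbracket⟩ := exists_linearIndependent_commutator_eq hdim hcomm
  by_cases hx : LinearIndependent ℂ ![x, μ x x]
  · obtain ⟨s, t, hy⟩ := exists_eq_smul_add_smul hdim hx y
    have hxw : t • (μ x (μ x x) - μ (μ x x) x) = x := by
      rw [hy] at hbracket
      simp only [map_add, map_smul, LinearMap.add_apply, LinearMap.smul_apply] at hbracket
      linear_combination (norm := module) hbracket
    have ht : t ≠ 0 := by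
      rintro rfl
      exact hx.ne_zero 0 (by simpa using hxw.symm)
    have hk : μ x (μ x x) - μ (μ x x) x = t⁻¹ • x := (eq_inv_smul_iff₀ ht).2 hxw
    obtain ⟨hmul, hsq⟩ := hμ.mul_of_commutator_sq_eq_smul hdim hx (inv_ne_zero ht) hk
    have hmul' : μ (μ x x) x = -t⁻¹ • x := by
      linear_combination (norm := module) hmul - hk
    exact ⟨.c08, iso1_c08_of_commutator_sq hdim hx (inv_ne_zero ht) hmul hmul' hsq⟩
  · obtain ⟨a, ha⟩ := exists_eq_smul_of_not_linearIndependent (hxy.ne_zero 0) hx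
    obtain ⟨hxx, c, p, q, hmul, hyy, hcq⟩ :=
      hμ.mul_of_commutator_eq_of_sq_eq_smul hdim hxy hbracket ha
    have hmul' : μ y x = (c - 1) • x := by
      linear_combination (norm := module) hmul - hbracket
    exact exists_iso1_plAlg_of_commutator_of_sq_eq_zero hdim hxy hcq hxx hmul hmul' hyy

end Classification

section Separation

/-- The multiplication `tm c` as a bilinear map. -/
def tmBilin (c : Fin 2 → Fin 2 → V2) : V2 →ₗ[ℂ] V2 →ₗ[ℂ] V2 :=
  LinearMap.mk₂ ℂ (tm c)
    (fun x x' y => by ext k; simp [tm]; ring) (fun r x y => by ext k; simp [tm]; ring)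
    (fun x y y' => by ext k; simp [tm]; ring) (fun r x y => by ext k; simp [tm]; ring)

theorem tmBilin_apply (c : Fin 2 → Fin 2 → V2) (x y : V2) :
    tmBilin c x y = ∑ i, ∑ j, (x i * y j) • c i j := rfl

theorem leftTrace_tmBilin (c : Fin 2 → Fin 2 → V2) (x : V2) :
    leftTrace (tmBilin c) x = ∑ i, ∑ j, x i * c i j j := by
  simp [leftTrace, LinearMap.trace_eq_matrix_trace ℂ (Pi.basisFun ℂ (Fin 2)), Matrix.trace_fin_two,
    tmBilin_apply]
  ring

theorem rightTrace_tmBilin (c : Fin 2 → Fin 2 → V2) (x : V2) :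
    rightTrace (tmBilin c) x = ∑ i, ∑ j, x i * c j i j := by
  simp [rightTrace, LinearMap.trace_eq_matrix_trace ℂ (Pi.basisFun ℂ (Fin 2)),
    Matrix.trace_fin_two, tmBilin_apply]
  ring

theorem mem_traceRatios_tmBilin {c : Fin 2 → Fin 2 → V2} {k : ℂ} :
    k ∈ traceRatios (tmBilin c) ↔ ∀ i, ∑ j, c i j j = k * ∑ j, c j i j := by
  simp only [traceRatios, Set.mem_ofPred_eq, leftTrace_tmBilin, rightTrace_tmBilin,
    ← Finset.mul_sum]
  refine ⟨fun h i => ?_, fun h x => ?_⟩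
  · simpa [Pi.single_apply] using h (Pi.single i 1)
  · simp only [h, Finset.mul_sum, mul_left_comm]

theorem traceRatios_plAlg (i : PLIdx) : traceRatios (tmBilin (plAlg i)) =
    match i with
    | .c01 => {1 / 2}
    | .c02 => {2}
    | .c03 => Set.univ
    | .c04 => ∅
    | .c05 α => {1 + α}
    | .c06 α => {(1 + α) / 2}
    | .c07 => {1}
    | .c08 => {3 / 2} := by
  ext k
  cases i <;> simp [mem_traceRatios_tmBilin, Fin.forall_fin_two, plAlg, tbl] <;> grind

theorem squareRatios_plAlg (i : PLIdx) : squareRatios (tmBilin (plAlg i)) =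
    match i with
    | .c01 | .c06 _ => {1 / 2}
    | .c02 | .c05 _ => {1}
    | .c03 | .c04 => Set.univ
    | .c07 | .c08 => ∅ := by
  ext k
  cases i <;>
    simp only [squareRatios, Set.mem_ofPred_eq, rightTrace_tmBilin, tmBilin_apply, plAlg, tbl,
      Fin.sum_univ_two, Matrix.cons_val, Pi.add_apply, Pi.smul_apply, Pi.zero_apply, smul_eq_mul,
      Set.mem_singleton_iff, Set.mem_univ, Set.mem_empty_iff_false]
  case c03 | c04 => simp
  case c07 | c08 =>
    refine iff_of_false (fun h => ?_) not_false
    grind [h ![1, 0], h ![0, 1], h ![1, 1], Matrix.cons_val_zero, Matrix.cons_val_one]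
  all_goals
    constructor
    · intro h
      grind [h ![1, 0], Matrix.cons_val_zero]
    · rintro rfl x
      ring

theorem exists_idempotent_plAlg_iff (i : PLIdx) :
    (∃ x ≠ 0, tmBilin (plAlg i) x x = x) ↔
      match i with
      | .c01 | .c02 | .c03 | .c04 => False
      | .c05 _ | .c06 _ | .c07 | .c08 => True := by
  cases i
  case c05 | c06 | c07 | c08 =>
    exact iff_of_true ⟨![1, 0], by simp, by simp [tmBilin_apply, plAlg, tbl]⟩ trivial
  all_goals
    refine iff_of_false (fun ⟨x, hx, h⟩ => hx (funext (Fin.forall_fin_two.2 ?_))) not_false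
    simp only [funext_iff, Fin.forall_fin_two, tmBilin_apply, plAlg, tbl, Fin.sum_univ_two,
      Matrix.cons_val, Pi.add_apply, Pi.smul_apply, Pi.zero_apply, smul_eq_mul] at h ⊢
    grind

theorem eq_of_iso1_plAlg {i j : PLIdx} (h : Iso1 (tm (plAlg i)) (tm (plAlg j))) : i = j := by
  obtain ⟨φ, hφ⟩ := h
  change ∀ x y, φ (tmBilin (plAlg i) x y) = tmBilin (plAlg j) (φ x) (φ y) at hφ
  have htrace := traceRatios_eq_of_equiv φ hφ
  have hsquare := squareRatios_eq_of_equiv φ hφ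
  have hidem := exists_idempotent_iff_of_equiv φ hφ
  simp only [traceRatios_plAlg] at htrace
  simp only [squareRatios_plAlg] at hsquare
  simp only [exists_idempotent_plAlg_iff] at hidem
  cases i <;> cases j <;>
    grind [Set.singleton_ne_univ, Set.empty_ne_univ, Set.singleton_ne_empty,
      Set.singleton_eq_singleton_iff]

end Separation

/-- Every nonzero 2-dimensional pre-Lie algebra over ℂ is isomorphic to
exactly one of C01–C08; these are pairwise non-isomorphic, and within the families
C05^α and C06^α distinct parameters give non-isomorphic algebras. -/
theorem statement13 (C : Type*) [AddCommGroup C] [Module ℂ C]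
    (hdim : Module.finrank ℂ C = 2)
    (circ : C →ₗ[ℂ] C →ₗ[ℂ] C)
    (hpre : ∀ x y z : C, circ (circ x y) z - circ (circ y x) z =
      circ x (circ y z) - circ y (circ x z))
    (hnz : ∃ x y : C, circ x y ≠ 0) :
    (∃ i : PLIdx, Iso1 (fun x y => circ x y) (tm (plAlg i))) ∧
    (∀ i j : PLIdx, Iso1 (tm (plAlg i)) (tm (plAlg j)) → i = j) := by
  refine ⟨?_, fun _ _ => eq_of_iso1_plAlg⟩
  have hμ : IsPreLie circ := hpre
  by_cases hcomm : ∀ x y, circ x y = circ y x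
  · exact exists_iso1_plAlg_of_comm hdim hcomm (hμ.assoc_of_comm hcomm) hnz
  · exact hμ.exists_iso1_plAlg_of_not_comm hdim hcomm
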